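/- There exists an absolute constant c > 0 with the following property (sample complexity for generalization). In the setting of the fixed-architecture unitary circuit model — F : U(4)^T → U(4m) given by F(U_1,…,U_T) = V_T (U_T ⊗ I_m) ⋯ V_1 (U_1 ⊗ I_m) V_0 for fixed V_0,…,V_T ∈ U(4m); a probability measure μ on a measurable space Z; measurable ρ : Z → density matrices in ℂ^{4m×4m}; measurable O : Z → Hermitian matrices in ℂ^{4m×4m} with ‖O_z‖ ≤ C; loss ℓ(θ; z) = Re Tr(O_z · F(θ) · ρ(z) · F(θ)*); risks R(θ) = ∫ ℓ(θ;·) dμ and R̂_S(θ) = (1/N) Σ_{i=1}^N ℓ(θ; z_i) — the following holds: for every ε > 0 and δ ∈ (0,1), if N ≥ c · C² · (T(1 + log T) + log(2/δ)) / ε², then with probability at least 1 − δ over S ~ μ^{⊗N}, simultaneously for every θ ∈ U(4)^T one has R(θ) − R̂_S(θ) ≤ ε. -/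

import Mathlib

open MeasureTheory Matrix
open scoped Kronecker ComplexOrder

/-- The ℓ²→ℓ² operator norm (spectral norm) of a complex square matrix. -/
noncomputable def opNorm {n : Type*} [Fintype n] [DecidableEq n] (A : Matrix n n ℂ) : ℝ :=
  ‖Matrix.toEuclideanCLM (𝕜 := ℂ) A‖

/-- The variational unitary circuit: `circuit V U L = V L * (U (L-1) ⊗ I) * ⋯ * (U 0 ⊗ I) * V 0`,
i.e. `L` layers of 2-qubit gates interleaved with fixed global unitaries on `ℂ^{4m}`. -/
noncomputable def circuit {m : ℕ} (V : ℕ → Matrix (Fin 4 × Fin m) (Fin 4 × Fin m) ℂ)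
    (U : ℕ → Matrix (Fin 4) (Fin 4) ℂ) : ℕ → Matrix (Fin 4 × Fin m) (Fin 4 × Fin m) ℂ
  | 0 => V 0
  | (t + 1) => V (t + 1) * (U t ⊗ₖ (1 : Matrix (Fin m) (Fin m) ℂ)) * circuit V U t

/-- The loss `ℓ(θ; z) = Re Tr(O_z · F(θ) · ρ(z) · F(θ)*)`. -/
noncomputable def qloss {m : ℕ} {Z : Type*}
    (V : ℕ → Matrix (Fin 4 × Fin m) (Fin 4 × Fin m) ℂ) (L : ℕ)
    (O ρ : Z → Matrix (Fin 4 × Fin m) (Fin 4 × Fin m) ℂ)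
    (U : ℕ → Matrix (Fin 4) (Fin 4) ℂ) (z : Z) : ℝ :=
  ((O z * circuit V U L * ρ z * (circuit V U L)ᴴ).trace).re

/-!
By trace duality, and because a product of contractions is Lipschitz in each factor, the loss moves
by at most `2 * C * ∑ t, ‖U t - U' t‖` when the gates change, uniformly in the data point. The gates
range over the unit ball of a real normed space of dimension `32 * T`, so comparing volumes yields
nets of the loss functions at every scale `C / 2 ^ k`, of log-cardinality
`O(T * (1 + log T) * (k + 1))`; the `log T` comes from having to cover each gate at scale
`1 / (T * 2 ^ k)`.

A single net at scale `ε` would cost a further factor `log (C / ε)`. Chaining avoids it: every loss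
function is the sum of its links, the differences of consecutive approximations, and Hoeffding's
inequality with a union bound controls all the links of a level at once. Their ranges shrink like
`2⁻¹ ^ k` while the allowed deviations shrink only like `(3 / 4) ^ k`, which leaves room for the
growing cardinality of the nets.
-/

section Matrices

open scoped Matrix.Norms.L2Operator

variable {𝕜 n : Type*} [RCLike 𝕜] [Fintype n] [DecidableEq n]

lemma opNorm_eq_norm (A : Matrix n n ℂ) : opNorm A = ‖A‖ :=
  rfl

lemma norm_le_one_of_mem_unitaryGroup {A : Matrix n n 𝕜} (hA : A ∈ unitaryGroup n 𝕜) :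
    ‖A‖ ≤ 1 := by
  cases subsingleton_or_nontrivial (Matrix n n 𝕜)
  · simp [Subsingleton.elim A 0]
  · exact (CStarRing.norm_of_mem_unitary hA).le

/-- The amplification `A ↦ A ⊗ I`, as a homomorphism of star-algebras, so that it is
automatically a contraction. -/
noncomputable def kroneckerOneHom (m n : Type*) [Fintype m] [DecidableEq m] [Fintype n]
    [DecidableEq n] : Matrix m m ℂ →⋆ₙₐ[ℂ] Matrix (m × n) (m × n) ℂ where
  toFun A := A ⊗ₖ (1 : Matrix n n ℂ)
  map_smul' c A := smul_kronecker c A 1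
  map_zero' := zero_kronecker 1
  map_add' A B := add_kronecker A B 1
  map_mul' A B := by simp only [← mul_kronecker_mul, one_mul]
  map_star' A := by simp only [star_eq_conjTranspose, conjTranspose_kronecker, conjTranspose_one]

lemma norm_kronecker_one_le {m : Type*} [Fintype m] [DecidableEq m] (A : Matrix m m ℂ) :
    ‖A ⊗ₖ (1 : Matrix n n ℂ)‖ ≤ ‖A‖ :=
  NonUnitalStarAlgHom.norm_apply_le (kroneckerOneHom m n) A

lemma norm_trace_mul_vecMulVec_star_le (A : Matrix n n 𝕜) (v : n → 𝕜) :
    ‖(A * vecMulVec v (star v)).trace‖ ≤ ‖A‖ * RCLike.re (vecMulVec v (star v)).trace := by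
  set x := WithLp.toLp 2 v
  have htrace : (A * vecMulVec v (star v)).trace = inner 𝕜 x (toEuclideanCLM (𝕜 := 𝕜) A x) := by
    rw [mul_vecMulVec, trace_vecMulVec, toEuclideanCLM_toLp, EuclideanSpace.inner_toLp_toLp]
  have hnorm : RCLike.re (vecMulVec v (star v)).trace = ‖x‖ ^ 2 := by
    rw [trace_vecMulVec, ← EuclideanSpace.inner_toLp_toLp]
    exact (norm_sq_eq_re_inner (𝕜 := 𝕜) x).symm
  calc ‖(A * vecMulVec v (star v)).trace‖
      ≤ ‖x‖ * ‖toEuclideanCLM (𝕜 := 𝕜) A x‖ := htrace ▸ norm_inner_le_norm _ _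
    _ ≤ ‖x‖ * (‖A‖ * ‖x‖) := by
      gcongr
      exact (toEuclideanCLM (𝕜 := 𝕜) A).le_opNorm x
    _ = ‖A‖ * RCLike.re (vecMulVec v (star v)).trace := by rw [hnorm]; ring

lemma norm_trace_mul_le_of_posSemidef (A : Matrix n n 𝕜) {ρ : Matrix n n 𝕜}
    (hρ : ρ.PosSemidef) : ‖(A * ρ).trace‖ ≤ ‖A‖ * RCLike.re ρ.trace := by
  obtain ⟨k, v, rfl⟩ := posSemidef_iff_eq_sum_vecMulVec.mp hρ
  simp only [Finset.mul_sum, trace_sum, map_sum]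
  exact (norm_sum_le _ _).trans
    (Finset.sum_le_sum fun i _ => norm_trace_mul_vecMulVec_star_le A (v i))

end Matrices

section Circuit

open scoped Matrix.Norms.L2Operator

lemma norm_mul_sub_mul_le {R : Type*} [NonUnitalSeminormedRing R] (a b c d : R) :
    ‖a * b - c * d‖ ≤ ‖a - c‖ * ‖b‖ + ‖c‖ * ‖b - d‖ :=
  calc ‖a * b - c * d‖ = ‖(a - c) * b + c * (b - d)‖ := by congr 1; noncomm_ring
    _ ≤ ‖(a - c) * b‖ + ‖c * (b - d)‖ := norm_add_le _ _
    _ ≤ ‖a - c‖ * ‖b‖ + ‖c‖ * ‖b - d‖ := by gcongr <;> exact norm_mul_le _ _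

lemma norm_star_mul_mul_sub_le {R : Type*} [NonUnitalSeminormedRing R] [StarRing R]
    [NormedStarGroup R] (a : R) {f g : R} (hf : ‖f‖ ≤ 1) (hg : ‖g‖ ≤ 1) :
    ‖star f * a * f - star g * a * g‖ ≤ 2 * ‖a‖ * ‖f - g‖ :=
  calc ‖star f * a * f - star g * a * g‖
      ≤ ‖star f * a - star g * a‖ * ‖f‖ + ‖star g * a‖ * ‖f - g‖ := norm_mul_sub_mul_le ..
    _ ≤ ‖star (f - g)‖ * ‖a‖ * ‖f‖ + ‖star g‖ * ‖a‖ * ‖f - g‖ := by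
      rw [← sub_mul, ← star_sub]
      gcongr <;> exact norm_mul_le _ _
    _ ≤ ‖f - g‖ * ‖a‖ * 1 + 1 * ‖a‖ * ‖f - g‖ := by
      rw [norm_star, norm_star]
      gcongr
    _ = 2 * ‖a‖ * ‖f - g‖ := by ring

variable {m L : ℕ} {V : ℕ → Matrix (Fin 4 × Fin m) (Fin 4 × Fin m) ℂ}
  {U U' : ℕ → Matrix (Fin 4) (Fin 4) ℂ}

lemma norm_mul_kronecker_one_le {A : Matrix (Fin 4 × Fin m) (Fin 4 × Fin m) ℂ} (hA : ‖A‖ ≤ 1)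
    (B : Matrix (Fin 4) (Fin 4) ℂ) : ‖A * (B ⊗ₖ (1 : Matrix (Fin m) (Fin m) ℂ))‖ ≤ ‖B‖ :=
  calc _ ≤ ‖A‖ * ‖B ⊗ₖ (1 : Matrix (Fin m) (Fin m) ℂ)‖ := norm_mul_le _ _
    _ ≤ 1 * ‖B‖ := by gcongr; exact norm_kronecker_one_le B
    _ = ‖B‖ := one_mul _

lemma norm_circuit_le_one (hV : ∀ s ≤ L, ‖V s‖ ≤ 1) (hU : ∀ t < L, ‖U t‖ ≤ 1) :
    ‖circuit V U L‖ ≤ 1 := by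
  induction L with
  | zero => exact hV 0 le_rfl
  | succ t ih =>
    have hlayer := (norm_mul_kronecker_one_le (hV (t + 1) le_rfl) (U t)).trans (hU t t.lt_succ_self)
    have hcircuit := ih (fun s hs => hV s (by lia)) (fun s hs => hU s (by lia))
    exact (norm_mul_le _ _).trans (mul_le_one₀ hlayer (norm_nonneg _) hcircuit)

lemma norm_circuit_sub_circuit_le (hV : ∀ s ≤ L, ‖V s‖ ≤ 1) (hU : ∀ t < L, ‖U t‖ ≤ 1)
    (hU' : ∀ t < L, ‖U' t‖ ≤ 1) :
    ‖circuit V U L - circuit V U' L‖ ≤ ∑ t ∈ Finset.range L, ‖U t - U' t‖ := by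
  induction L with
  | zero => simp [circuit]
  | succ t ih =>
    have hVt : ∀ s ≤ t, ‖V s‖ ≤ 1 := fun s hs => hV s (by lia)
    have hUt : ∀ s < t, ‖U s‖ ≤ 1 := fun s hs => hU s (by lia)
    have hlayer' := (norm_mul_kronecker_one_le (hV (t + 1) le_rfl) (U' t)).trans
      (hU' t t.lt_succ_self)
    have hlayer_sub : ‖V (t + 1) * (U t ⊗ₖ 1) - V (t + 1) * (U' t ⊗ₖ 1)‖ ≤ ‖U t - U' t‖ := by
      have hsub := map_sub (kroneckerOneHom (Fin 4) (Fin m)) (U t) (U' t)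
      rw [← mul_sub]
      exact hsub ▸ norm_mul_kronecker_one_le (hV (t + 1) le_rfl) (U t - U' t)
    calc ‖circuit V U (t + 1) - circuit V U' (t + 1)‖
        ≤ ‖V (t + 1) * (U t ⊗ₖ 1) - V (t + 1) * (U' t ⊗ₖ 1)‖ * ‖circuit V U t‖
          + ‖V (t + 1) * (U' t ⊗ₖ 1)‖ * ‖circuit V U t - circuit V U' t‖ :=
        norm_mul_sub_mul_le ..
      _ ≤ ‖U t - U' t‖ * 1 + 1 * ∑ s ∈ Finset.range t, ‖U s - U' s‖ := by
        gcongr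
        · exact norm_circuit_le_one hVt hUt
        · exact ih hVt hUt fun s hs => hU' s (by lia)
      _ = ∑ s ∈ Finset.range (t + 1), ‖U s - U' s‖ := by rw [Finset.sum_range_succ]; ring

variable {Z : Type*} {O ρ : Z → Matrix (Fin 4 × Fin m) (Fin 4 × Fin m) ℂ} {C : ℝ} {z : Z}

-- Passing to the Heisenberg picture, where the observable, not the state, is evolved.
lemma qloss_eq_re_trace_mul (z : Z) :
    qloss V L O ρ U z = (((circuit V U L)ᴴ * O z * circuit V U L * ρ z).trace).re := by
  rw [qloss, trace_mul_comm]
  simp only [Matrix.mul_assoc]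

lemma abs_qloss_le (hV : ∀ s ≤ L, ‖V s‖ ≤ 1) (hU : ∀ t < L, ‖U t‖ ≤ 1)
    (hρ : (ρ z).PosSemidef) (htr : (ρ z).trace.re ≤ 1) (hO : ‖O z‖ ≤ C) :
    |qloss V L O ρ U z| ≤ C := by
  set F := circuit V U L
  have hF1 : ‖F‖ ≤ 1 := norm_circuit_le_one hV hU
  calc |qloss V L O ρ U z| ≤ ‖(Fᴴ * O z * F * ρ z).trace‖ := by
        rw [qloss_eq_re_trace_mul]
        exact Complex.abs_re_le_norm _
    _ ≤ ‖Fᴴ * O z * F‖ * (ρ z).trace.re := norm_trace_mul_le_of_posSemidef _ hρ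
    _ ≤ ‖Fᴴ * O z * F‖ * 1 := by gcongr
    _ ≤ ‖Fᴴ‖ * ‖O z‖ * ‖F‖ := (mul_one _).trans_le norm_mul₃_le
    _ ≤ 1 * C * 1 := by
        have hC : 0 ≤ C := (norm_nonneg _).trans hO
        rw [l2_opNorm_conjTranspose]
        gcongr
    _ = C := by ring

lemma abs_qloss_sub_qloss_le (hV : ∀ s ≤ L, ‖V s‖ ≤ 1) (hU : ∀ t < L, ‖U t‖ ≤ 1)
    (hU' : ∀ t < L, ‖U' t‖ ≤ 1) (hρ : (ρ z).PosSemidef) (htr : (ρ z).trace.re ≤ 1)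
    (hO : ‖O z‖ ≤ C) :
    |qloss V L O ρ U z - qloss V L O ρ U' z|
      ≤ 2 * C * ∑ t ∈ Finset.range L, ‖U t - U' t‖ := by
  set F := circuit V U L
  set F' := circuit V U' L
  have hC : 0 ≤ C := (norm_nonneg _).trans hO
  calc |qloss V L O ρ U z - qloss V L O ρ U' z|
      ≤ ‖((Fᴴ * O z * F - F'ᴴ * O z * F') * ρ z).trace‖ := by
        rw [qloss_eq_re_trace_mul, qloss_eq_re_trace_mul, ← Complex.sub_re, ← trace_sub, ← sub_mul]
        exact Complex.abs_re_le_norm _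
    _ ≤ ‖Fᴴ * O z * F - F'ᴴ * O z * F'‖ * (ρ z).trace.re := norm_trace_mul_le_of_posSemidef _ hρ
    _ ≤ ‖Fᴴ * O z * F - F'ᴴ * O z * F'‖ * 1 := by gcongr
    _ ≤ 2 * ‖O z‖ * ‖F - F'‖ := (mul_one _).trans_le <|
        norm_star_mul_mul_sub_le (O z) (norm_circuit_le_one hV hU) (norm_circuit_le_one hV hU')
    _ ≤ 2 * C * ∑ t ∈ Finset.range L, ‖U t - U' t‖ := by
        gcongr
        exact norm_circuit_sub_circuit_le hV hU hU'

lemma measurable_qloss [MeasurableSpace Z] (hρ : ∀ p q, Measurable fun z => ρ z p q)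
    (hO : ∀ p q, Measurable fun z => O z p q) : Measurable (qloss V L O ρ U) := by
  unfold qloss
  simp only [trace, diag, mul_apply]
  fun_prop

end Circuit

section CoveringNumber

open Metric Module
open scoped NNReal

variable {E : Type*} [NormedAddCommGroup E] [NormedSpace ℝ E] [FiniteDimensional ℝ E]

lemma card_mul_pow_le_of_isSeparated {s : Finset E} {x : E} {R : ℝ} {η : ℝ≥0} (hη : 0 < η)
    (hR : 0 ≤ R) (hs : (s : Set E) ⊆ closedBall x R) (hsep : IsSeparated η (s : Set E)) :
    (s.card : ℝ) * (η / 2) ^ finrank ℝ E ≤ (R + η / 2) ^ finrank ℝ E := by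
  borelize E
  let μ : Measure E := Measure.addHaar
  have hη2 : (0 : ℝ) < η / 2 := by positivity
  have hdisj : (s : Set E).PairwiseDisjoint fun c => ball c (η / 2 : ℝ) := by
    intro c hc d hd hcd
    have h : (η : ENNReal) < edist c d := hsep hc hd hcd
    rw [edist_nndist, ENNReal.coe_lt_coe, ← NNReal.coe_lt_coe, coe_nndist] at h
    exact ball_disjoint_ball (by linarith)
  have hsub : (⋃ c ∈ s, ball c (η / 2 : ℝ)) ⊆ ball x (R + η / 2) :=
    Set.iUnion₂_subset fun c hc => ball_subset_ball' (by linarith [mem_closedBall.1 (hs hc)])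
  have hball (y : E) {r : ℝ} (hr : 0 < r) :
      μ.real (ball y r) = r ^ finrank ℝ E * μ.real (ball 0 1) := by
    rw [measureReal_def, μ.addHaar_ball_of_pos y hr, ENNReal.toReal_mul,
      ENNReal.toReal_ofReal (by positivity), measureReal_def]
  have hunit : 0 < μ.real (ball (0 : E) 1) :=
    ENNReal.toReal_pos (measure_ball_pos μ _ one_pos).ne' measure_ball_lt_top.ne
  refine le_of_mul_le_mul_right ?_ hunit
  calc s.card * (η / 2 : ℝ) ^ finrank ℝ E * μ.real (ball 0 1)
      = μ.real (⋃ c ∈ s, ball c (η / 2 : ℝ)) := by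
        rw [measureReal_biUnion_finset hdisj fun _ _ => measurableSet_ball,
          Finset.sum_congr rfl fun c _ => hball c hη2, Finset.sum_const, nsmul_eq_mul, mul_assoc]
    _ ≤ μ.real (ball x (R + η / 2)) := measureReal_mono hsub measure_ball_lt_top.ne
    _ = (R + η / 2) ^ finrank ℝ E * μ.real (ball 0 1) := hball x (by positivity)

lemma card_le_of_isSeparated_of_subset_closedBall {s : Finset E} {x : E} {R : ℝ} {η : ℝ≥0}
    (hη : 0 < η) (hR : 0 ≤ R) (hs : (s : Set E) ⊆ closedBall x R)
    (hsep : IsSeparated η (s : Set E)) : (s.card : ℝ) ≤ (1 + 2 * R / η) ^ finrank ℝ E := by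
  have hscale : (1 + 2 * R / η : ℝ) * (η / 2) = R + η / 2 := by field_simp; ring
  have h := card_mul_pow_le_of_isSeparated hη hR hs hsep
  rw [← hscale, mul_pow] at h
  exact le_of_mul_le_mul_right h (by positivity)

theorem coveringNumber_closedBall_le (x : E) {R : ℝ} {η : ℝ≥0} (hη : 0 < η) (hR : 0 ≤ R) :
    coveringNumber η (closedBall x R) ≤ ⌊(1 + 2 * R / η : ℝ) ^ finrank ℝ E⌋₊ := by
  refine (coveringNumber_le_packingNumber η _).trans <|
    iSup_le fun s => iSup_le fun hs => iSup_le fun hsep => ?_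
  by_contra! hlt
  obtain ⟨t, hts, ht⟩ := Set.exists_subset_encard_eq (Order.add_one_le_of_lt hlt)
  lift t to Finset E using Set.finite_of_encard_eq_coe ht
  have hcard := card_le_of_isSeparated_of_subset_closedBall hη hR (hts.trans hs) (hsep.subset hts)
  rw [Set.encard_coe_eq_coe_finsetCard] at ht
  have := Nat.le_floor hcard
  norm_cast at ht
  lia

lemma exists_finset_isCover_closedBall (x : E) {R : ℝ} {η : ℝ≥0} (hη : 0 < η) (hR : 0 ≤ R) :
    ∃ s : Finset E, (s : Set E) ⊆ closedBall x R ∧ IsCover η (closedBall x R) (s : Set E) ∧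
      (s.card : ℝ) ≤ (1 + 2 * R / η) ^ finrank ℝ E := by
  have hle := coveringNumber_closedBall_le x hη hR
  have hfin : coveringNumber η (closedBall x R) ≠ ⊤ :=
    ne_top_of_le_ne_top (ENat.natCast_ne_top _) hle
  lift minimalCover η (closedBall x R) to Finset E using finite_minimalCover with s hs
  refine ⟨s, hs ▸ minimalCover_subset, hs ▸ isCover_minimalCover hfin, ?_⟩
  rw [← encard_minimalCover hfin, ← hs, Set.encard_coe_eq_coe_finsetCard, Nat.cast_le] at hle
  exact (Nat.le_floor_iff (by positivity)).1 hle

variable (E) in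
lemma exists_finset_cover_of_norm_le_one (T : ℕ) {η : ℝ≥0} (hη : 0 < η) :
    ∃ s : Finset (ℕ → E), (s.card : ℝ) ≤ (1 + 2 / η) ^ (T * finrank ℝ E) ∧
      (∀ u ∈ s, ∀ t < T, ‖u t‖ ≤ 1) ∧
      ∀ v : ℕ → E, (∀ t < T, ‖v t‖ ≤ 1) → ∃ u ∈ s, ∀ t < T, ‖v t - u t‖ ≤ η := by
  classical
  obtain ⟨s, hsub, hcover, hcard⟩ := exists_finset_isCover_closedBall (0 : Fin T → E) hη zero_le_one
  rw [finrank_pi_fintype, Finset.sum_const, Finset.card_univ, Fintype.card_fin, smul_eq_mul,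
    mul_one] at hcard
  have hextend (x : Fin T → E) (i : Fin T) : Function.extend Fin.val x 0 (i : ℕ) = x i :=
    Fin.val_injective.extend_apply x 0 i
  refine ⟨s.image fun x => Function.extend Fin.val x 0,
    (Nat.cast_le.2 Finset.card_image_le).trans hcard, ?_, fun v hv => ?_⟩
  · refine Finset.forall_mem_image.2 fun x hx t ht => ?_
    have hnorm : ‖x‖ ≤ 1 := mem_closedBall_zero_iff.1 (hsub hx)
    rw [hextend x ⟨t, ht⟩]
    exact (norm_le_pi_norm x _).trans hnorm
  · have hvmem : (fun i : Fin T => v i) ∈ closedBall 0 1 :=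
      mem_closedBall_zero_iff.2 <| (pi_norm_le_iff_of_nonneg zero_le_one).2 fun i => hv i i.2
    obtain ⟨x, hx, hdist⟩ := Set.mem_iUnion₂.1 (hcover.subset_iUnion_closedBall hvmem)
    refine ⟨_, Finset.mem_image_of_mem _ hx, fun t ht => ?_⟩
    rw [hextend x ⟨t, ht⟩]
    exact (norm_le_pi_norm ((fun i : Fin T => v i) - x) ⟨t, ht⟩).trans
      (mem_closedBall_iff_norm.1 hdist)

end CoveringNumber

section GeneralizationGap

open ProbabilityTheory
open scoped NNReal

variable {Z : Type*} [MeasurableSpace Z] {μ : Measure Z} {f g : Z → ℝ} {D : ℝ} {N : ℕ}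

/-- The risk of the loss function `f` under `μ` minus its empirical risk on the sample `S`. -/
noncomputable def generalizationGap (μ : Measure Z) (f : Z → ℝ) (S : Fin N → Z) : ℝ :=
  (∫ z, f z ∂μ) - (1 / N) * ∑ i, f (S i)

lemma generalizationGap_zero (S : Fin N → Z) : generalizationGap μ 0 S = 0 := by
  simp [generalizationGap]

lemma generalizationGap_sub (hf : Integrable f μ) (hg : Integrable g μ) (S : Fin N → Z) :
    generalizationGap μ (f - g) S = generalizationGap μ f S - generalizationGap μ g S := by
  simp only [generalizationGap, Pi.sub_apply, integral_sub hf hg, Finset.sum_sub_distrib]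
  ring

lemma natCast_mul_generalizationGap (hN : 0 < N) (S : Fin N → Z) :
    N * generalizationGap μ f S = ∑ i, ((∫ z, f z ∂μ) - f (S i)) := by
  simp only [generalizationGap, Finset.sum_sub_distrib, Finset.sum_const, Finset.card_univ,
    Fintype.card_fin, nsmul_eq_mul]
  field_simp

variable [IsProbabilityMeasure μ]

lemma generalizationGap_le (hD : ∀ z, |f z| ≤ D) (hN : 0 < N) (S : Fin N → Z) :
    generalizationGap μ f S ≤ 2 * D := by
  have hrisk : ∫ z, f z ∂μ ≤ D :=
    calc ∫ z, f z ∂μ ≤ ‖∫ z, f z ∂μ‖ := le_abs_self _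
      _ ≤ D * μ.real Set.univ := norm_integral_le_of_norm_le_const (.of_forall hD)
      _ = D := by rw [probReal_univ, mul_one]
  have hsum : N * generalizationGap μ f S ≤ N * (2 * D) := by
    rw [natCast_mul_generalizationGap hN]
    calc ∑ i, ((∫ z, f z ∂μ) - f (S i)) ≤ ∑ _i : Fin N, 2 * D :=
          Finset.sum_le_sum fun i _ => by linarith [(abs_le.1 (hD (S i))).1]
      _ = N * (2 * D) := by simp
  exact le_of_mul_le_mul_left hsum (by positivity)

lemma hasSubgaussianMGF_integral_sub {D : ℝ≥0} (hf : Measurable f) (hD : ∀ z, |f z| ≤ D) :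
    HasSubgaussianMGF (fun z => (∫ y, f y ∂μ) - f z) (D ^ 2) μ := by
  have h := (hasSubgaussianMGF_of_mem_Icc (μ := μ) hf.aemeasurable
    (.of_forall fun z => abs_le.1 (hD z))).neg
  have hhalf : ‖(D : ℝ) - -D‖₊ / 2 = D := by
    rw [sub_neg_eq_add, ← NNReal.coe_add, NNReal.nnnorm_eq, add_self_div_two]
  rw [hhalf] at h
  exact h.congr (.of_forall fun z => neg_sub _ _)

lemma measure_le_generalizationGap_le (hf : Measurable f) (hD : ∀ z, |f z| ≤ D) (hN : 0 < N)
    {s : ℝ} (hs : 0 ≤ s) :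
    (Measure.pi fun _ : Fin N => μ) {S | s ≤ generalizationGap μ f S}
      ≤ ENNReal.ofReal (Real.exp (-(N * s ^ 2 / (2 * D ^ 2)))) := by
  obtain ⟨z₀⟩ := nonempty_of_isProbabilityMeasure μ
  lift D to ℝ≥0 using (abs_nonneg _).trans (hD z₀)
  set P := Measure.pi fun _ : Fin N => μ
  let X (i : Fin N) (S : Fin N → Z) : ℝ := (∫ z, f z ∂μ) - f (S i)
  have hindep : iIndepFun X P :=
    iIndepFun_pi (X := fun _ z => (∫ y, f y ∂μ) - f z) fun _ => (hf.const_sub _).aemeasurable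
  have hsubgaussian (i : Fin N) : HasSubgaussianMGF (X i) (D ^ 2) P := by
    have heval := measurePreserving_eval (fun _ : Fin N => μ) i
    have h : HasSubgaussianMGF (fun z => (∫ y, f y ∂μ) - f z) (D ^ 2) (P.map fun S => S i) :=
      heval.map_eq.symm ▸ hasSubgaussianMGF_integral_sub hf hD
    exact h.of_map (X := fun z => (∫ y, f y ∂μ) - f z) heval.measurable.aemeasurable
  have hevent : {S | s ≤ generalizationGap μ f S} = {S | N * s ≤ ∑ i, X i S} := by
    ext S
    rw [Set.mem_ofPred_eq, Set.mem_ofPred_eq, ← natCast_mul_generalizationGap hN,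
      mul_le_mul_iff_right₀ (by positivity)]
  rw [hevent, ← ofReal_measureReal]
  refine ENNReal.ofReal_le_ofReal <| (HasSubgaussianMGF.measure_sum_ge_le_of_iIndepFun hindep
    (fun i _ => hsubgaussian i) (by positivity)).trans_eq ?_
  simp only [Finset.sum_const, Finset.card_univ, Fintype.card_fin, nsmul_eq_mul, NNReal.coe_mul,
    NNReal.coe_natCast, NNReal.coe_pow]
  congr 1
  rcases eq_or_ne D 0 with rfl | hD0
  · simp
  · field_simp

lemma measure_exists_le_generalizationGap_le {G : Finset (Z → ℝ)} (hG : ∀ h ∈ G, Measurable h)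
    (hD : ∀ h ∈ G, ∀ z, |h z| ≤ D) (hN : 0 < N) {s : ℝ} (hs : 0 ≤ s) :
    (Measure.pi fun _ : Fin N => μ) {S | ∃ h ∈ G, s ≤ generalizationGap μ h S}
      ≤ ENNReal.ofReal (G.card * Real.exp (-(N * s ^ 2 / (2 * D ^ 2)))) := by
  have hunion : {S : Fin N → Z | ∃ h ∈ G, s ≤ generalizationGap μ h S}
      = ⋃ h ∈ G, {S | s ≤ generalizationGap μ h S} := by
    ext S
    simp
  rw [hunion]
  refine (measure_biUnion_finset_le _ _).trans <| (Finset.sum_le_sum fun h hh =>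
    measure_le_generalizationGap_le (hG h hh) (hD h hh) hN hs).trans_eq ?_
  rw [Finset.sum_const, nsmul_eq_mul, ENNReal.ofReal_mul (by positivity), ENNReal.ofReal_natCast]

lemma generalizationGap_le_of_forall_sub_le {g : ℕ → Z → ℝ} {D s : ℕ → ℝ} {ε : ℝ}
    (hf : Integrable f μ) (hg : ∀ k, Integrable (g k) μ) (hg0 : g 0 = 0)
    (hD : ∀ k z, |f z - g k z| ≤ D k) (hDlim : Filter.Tendsto D .atTop (nhds 0))
    (hs : ∀ k, 0 ≤ s k) (hsum : HasSum s ε) (hN : 0 < N) {S : Fin N → Z}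
    (hgap : ∀ k, generalizationGap μ (g (k + 1) - g k) S ≤ s k) :
    generalizationGap μ f S ≤ ε := by
  have hchain (k : ℕ) : generalizationGap μ (g k) S ≤ ε :=
    calc generalizationGap μ (g k) S
        = ∑ j ∈ Finset.range k, generalizationGap μ (g (j + 1) - g j) S := by
          simp only [generalizationGap_sub (hg _) (hg _)]
          rw [Finset.sum_range_sub fun j => generalizationGap μ (g j) S, hg0,
            generalizationGap_zero, sub_zero]
      _ ≤ ∑ j ∈ Finset.range k, s j := Finset.sum_le_sum fun j _ => hgap j
      _ ≤ ε := sum_le_hasSum _ (fun j _ => hs j) hsum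
  have happrox (k : ℕ) : generalizationGap μ f S ≤ ε + 2 * D k := by
    have h := generalizationGap_le (μ := μ) (f := f - g k) (hD k) hN S
    rw [generalizationGap_sub hf (hg k)] at h
    linarith [hchain k]
  have hlim : Filter.Tendsto (fun k => ε + 2 * D k) .atTop (nhds ε) := by
    simpa using (hDlim.const_mul 2).const_add ε
  exact ge_of_tendsto' hlim happrox

end GeneralizationGap

section Chaining

open scoped Pointwise

variable {Z : Type*} {F : Set (Z → ℝ)} {C A : ℝ} {net : ℕ → Finset (Z → ℝ)}

open scoped Classical in
/-- The possible `k`-th links of a chain: the differences of members of consecutive nets that are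
as small as two approximations of the same function at scales `C / 2 ^ (k + 1)` and `C / 2 ^ k`
have to be. -/
noncomputable def chainLinks (net : ℕ → Finset (Z → ℝ)) (C : ℝ) (k : ℕ) : Finset (Z → ℝ) :=
  {h ∈ net (k + 1) - net k | ∀ z, |h z| ≤ 2 * C / 2 ^ k}

lemma abs_le_of_mem_chainLinks {k : ℕ} {h : Z → ℝ} (hh : h ∈ chainLinks net C k) (z : Z) :
    |h z| ≤ 2 * C / 2 ^ k := by
  classical exact (Finset.mem_filter.1 hh).2 z

lemma sub_mem_chainLinks (hC : 0 ≤ C) {f g g' : Z → ℝ} {k : ℕ} (hg : g ∈ net k)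
    (hg' : g' ∈ net (k + 1)) (hfg : ∀ z, |f z - g z| ≤ C / 2 ^ k)
    (hfg' : ∀ z, |f z - g' z| ≤ C / 2 ^ (k + 1)) : g' - g ∈ chainLinks net C k := by
  classical
  refine Finset.mem_filter.2 ⟨Finset.sub_mem_sub hg' hg, fun z => ?_⟩
  have hscale : C / 2 ^ (k + 1) ≤ C / 2 ^ k := by
    gcongr
    exacts [one_le_two, k.le_succ]
  calc |g' z - g z| ≤ |f z - g' z| + |f z - g z| :=
        abs_sub_comm (f z) (g' z) ▸ abs_sub_le _ _ _
    _ ≤ C / 2 ^ k + C / 2 ^ k := add_le_add ((hfg' z).trans hscale) (hfg z)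
    _ = 2 * C / 2 ^ k := by ring

variable [MeasurableSpace Z]

/-- `net k` is a finite uniform net of the function class `F` at scale `C / 2 ^ k`, of
log-cardinality at most `A * (k + 1)`. The net at scale `C` is required to be `{0}`, so that `F`
is bounded by `C` and every chain starts at a function without generalization gap. -/
structure IsDyadicNet (F : Set (Z → ℝ)) (C A : ℝ) (net : ℕ → Finset (Z → ℝ)) : Prop where
  zero : net 0 = {0}
  measurable : ∀ k, ∀ g ∈ net k, Measurable g
  card_le : ∀ k : ℕ, ((net k).card : ℝ) ≤ Real.exp (A * (k + 1))
  exists_abs_sub_le : ∀ f ∈ F, ∀ k, ∃ g ∈ net k, ∀ z, |f z - g z| ≤ C / 2 ^ k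

namespace IsDyadicNet

lemma entropy_nonneg (h : IsDyadicNet F C A net) : 0 ≤ A := by
  simpa [h.zero] using h.card_le 0

lemma measurable_of_mem_chainLinks (h : IsDyadicNet F C A net) {k : ℕ} {g : Z → ℝ}
    (hg : g ∈ chainLinks net C k) : Measurable g := by
  classical
  obtain ⟨g₁, hg₁, g₂, hg₂, rfl⟩ := Finset.mem_sub.1 (Finset.mem_filter.1 hg).1
  exact (h.measurable _ _ hg₁).sub (h.measurable _ _ hg₂)

lemma card_chainLinks_le (h : IsDyadicNet F C A net) (k : ℕ) :
    ((chainLinks net C k).card : ℝ) ≤ Real.exp (3 * A * (k + 1)) := by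
  classical
  have hcard : (chainLinks net C k).card ≤ (net (k + 1)).card * (net k).card :=
    (Finset.card_filter_le _ _).trans Finset.card_sub_le
  calc ((chainLinks net C k).card : ℝ) ≤ (net (k + 1)).card * (net k).card := mod_cast hcard
    _ ≤ Real.exp (A * ((k + 1 : ℕ) + 1)) * Real.exp (A * (k + 1)) := by
      gcongr
      exacts [h.card_le (k + 1), h.card_le k]
    _ = Real.exp (3 * A * (k + 1) - A * k) := by
      rw [← Real.exp_add]
      push_cast
      ring_nf
    _ ≤ Real.exp (3 * A * (k + 1)) := by
      have := h.entropy_nonneg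
      gcongr
      exact sub_le_self _ (by positivity)

end IsDyadicNet

-- The tolerances `(3 / 4) ^ k` sum up, yet decay more slowly than the ranges `2⁻¹ ^ k` of the
-- links, so that the Hoeffding exponent `(9 / 4) ^ k` dominates the linearly growing entropy.
lemma le_hoeffding_exponent {B ε n : ℝ} (hC : 0 < C) (hε : 0 < ε) (hB : 0 ≤ B)
    (hn : 128 * C ^ 2 * B / ε ^ 2 ≤ n) (k : ℕ) :
    B * (k + 1) ≤ n * (ε / 4 * (3 / 4) ^ k) ^ 2 / (2 * (2 * C / 2 ^ k) ^ 2) := by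
  have hbernoulli : (k + 1 : ℝ) ≤ (9 / 4) ^ k := by
    have h := one_add_mul_le_pow (a := (5 / 4 : ℝ)) (by norm_num) k
    norm_num at h
    linarith [k.cast_nonneg (α := ℝ)]
  have hratio : ((9 : ℝ) / 4) ^ k = ((3 / 4) ^ k) ^ 2 * (2 ^ k) ^ 2 := by
    rw [← mul_pow, ← mul_pow, ← pow_mul, mul_comm k, pow_mul]
    norm_num
  have hBn : B ≤ n * ε ^ 2 / (128 * C ^ 2) := by
    rw [div_le_iff₀ (by positivity)] at hn
    rw [le_div_iff₀ (by positivity)]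
    linarith
  calc B * (k + 1) ≤ n * ε ^ 2 / (128 * C ^ 2) * (9 / 4) ^ k := by gcongr; exact hB.trans hBn
    _ = n * (ε / 4 * (3 / 4) ^ k) ^ 2 / (2 * (2 * C / 2 ^ k) ^ 2) := by
      rw [hratio]
      field_simp
      ring

lemma exp_mul_exp_neg_le_pow {δ H : ℝ} (hδ : 0 < δ) {k : ℕ}
    (hH : (A + Real.log (2 / δ)) * (k + 1) ≤ H) :
    Real.exp (A * (k + 1)) * Real.exp (-H) ≤ (δ / 2) ^ (k + 1) :=
  calc Real.exp (A * (k + 1)) * Real.exp (-H)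
      ≤ Real.exp (A * (k + 1)) * Real.exp (-((A + Real.log (2 / δ)) * (k + 1))) := by gcongr
    _ = Real.exp ((k + 1 : ℕ) * Real.log (δ / 2)) := by
      rw [← Real.exp_add, ← inv_div 2 δ, Real.log_inv]
      push_cast
      ring_nf
    _ = (δ / 2) ^ (k + 1) := by rw [Real.exp_nat_mul, Real.exp_log (by positivity)]

lemma measure_iUnion_le_of_le_half_pow {Ω : Type*} [MeasurableSpace Ω] {P : Measure Ω}
    {E : ℕ → Set Ω} {δ : ℝ} (hδ : 0 ≤ δ) (hδ1 : δ ≤ 1)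
    (hE : ∀ k, P (E k) ≤ ENNReal.ofReal ((δ / 2) ^ (k + 1))) :
    P (⋃ k, E k) ≤ ENNReal.ofReal δ := by
  have hgeom : HasSum (fun k : ℕ => (δ / 2) ^ (k + 1)) (δ / 2 * (1 - δ / 2)⁻¹) := by
    simpa only [pow_succ'] using
      (hasSum_geometric_of_lt_one (by positivity) (by linarith)).mul_left (δ / 2)
  calc P (⋃ k, E k) ≤ ∑' k, P (E k) := measure_iUnion_le _
    _ ≤ ∑' k : ℕ, ENNReal.ofReal ((δ / 2) ^ (k + 1)) := ENNReal.tsum_le_tsum hE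
    _ = ENNReal.ofReal (δ / 2 * (1 - δ / 2)⁻¹) := by
      rw [← ENNReal.ofReal_tsum_of_nonneg (fun k => by positivity) hgeom.summable, hgeom.tsum_eq]
    _ ≤ ENNReal.ofReal δ := by
      gcongr
      rw [← div_eq_mul_inv, div_le_iff₀ (by linarith)]
      nlinarith

lemma ofReal_one_sub_le_measure {Ω : Type*} [MeasurableSpace Ω] {P : Measure Ω}
    [IsProbabilityMeasure P] {E E' : Set Ω} {δ : ℝ} (hδ : 0 ≤ δ) (hE : P E ≤ ENNReal.ofReal δ)
    (hsub : Eᶜ ⊆ E') : ENNReal.ofReal (1 - δ) ≤ P E' := by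
  have hcover : 1 ≤ P E' + P E := by
    rw [← measure_univ (μ := P)]
    refine (measure_mono fun ω _ => ?_).trans (measure_union_le E' E)
    exact (em (ω ∈ E)).elim .inr fun hω => .inl (hsub hω)
  rw [ENNReal.ofReal_sub _ hδ, ENNReal.ofReal_one, tsub_le_iff_right]
  exact hcover.trans (by gcongr)

namespace IsDyadicNet

variable {μ : Measure Z} [IsProbabilityMeasure μ] {N : ℕ} {ε δ : ℝ}

lemma measure_exists_chainLink_le (h : IsDyadicNet F C A net) (hC : 0 < C) (hN : 0 < N)
    (hε : 0 < ε) (hδ : 0 < δ) (hδ1 : δ ≤ 1)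
    (hNle : 128 * C ^ 2 * (3 * A + Real.log (2 / δ)) / ε ^ 2 ≤ N) (k : ℕ) :
    (Measure.pi fun _ : Fin N => μ)
        {S | ∃ g ∈ chainLinks net C k, ε / 4 * (3 / 4) ^ k ≤ generalizationGap μ g S}
      ≤ ENNReal.ofReal ((δ / 2) ^ (k + 1)) := by
  have hentropy : 0 ≤ 3 * A + Real.log (2 / δ) := by
    have hA := h.entropy_nonneg
    have hlog : 0 ≤ Real.log (2 / δ) := Real.log_nonneg ((one_le_div hδ).2 (by linarith))
    positivity
  refine (measure_exists_le_generalizationGap_le (fun g hg => h.measurable_of_mem_chainLinks hg)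
    (fun g hg => abs_le_of_mem_chainLinks hg) hN (by positivity)).trans ?_
  refine ENNReal.ofReal_le_ofReal <| (mul_le_mul_of_nonneg_right (h.card_chainLinks_le k)
    (Real.exp_nonneg _)).trans ?_
  exact exp_mul_exp_neg_le_pow hδ (le_hoeffding_exponent hC hε hentropy hNle k)

lemma generalizationGap_le_of_forall_chainLinks (h : IsDyadicNet F C A net)
    (hF : ∀ f ∈ F, Measurable f) (hC : 0 < C) (hN : 0 < N) (hε : 0 < ε) {S : Fin N → Z}
    (hS : ∀ k, ∀ g ∈ chainLinks net C k, generalizationGap μ g S < ε / 4 * (3 / 4) ^ k)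
    {f : Z → ℝ} (hf : f ∈ F) : generalizationGap μ f S ≤ ε := by
  choose g hg hfg using h.exists_abs_sub_le f hf
  have hg0 : g 0 = 0 := Finset.mem_singleton.1 (h.zero ▸ hg 0)
  have hfint : Integrable f μ :=
    .of_bound (hF f hf).aestronglyMeasurable C <| .of_forall fun z => by
      simpa [hg0] using hfg 0 z
  have hgint (k : ℕ) : Integrable (g k) μ := by
    have hsub : Integrable (f - g k) μ :=
      .of_bound ((hF f hf).sub (h.measurable k _ (hg k))).aestronglyMeasurable _
        (.of_forall (hfg k))
    simpa using hfint.sub hsub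
  have hscale : Filter.Tendsto (fun k : ℕ => C / 2 ^ k) .atTop (nhds 0) :=
    tendsto_const_nhds.div_atTop (tendsto_pow_atTop_atTop_of_one_lt one_lt_two)
  have htolerance : HasSum (fun k : ℕ => ε / 4 * (3 / 4) ^ k) ε := by
    convert! (hasSum_geometric_of_lt_one (r := (3 / 4 : ℝ)) (by norm_num) (by norm_num)).mul_left
      (ε / 4) using 1
    norm_num
  exact generalizationGap_le_of_forall_sub_le hfint hgint hg0 hfg hscale (fun k => by positivity)
    htolerance hN fun k => (hS k _ <|
      sub_mem_chainLinks hC.le (hg k) (hg (k + 1)) (hfg k) (hfg (k + 1))).le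

theorem ofReal_one_sub_le_measure_forall_generalizationGap_le (h : IsDyadicNet F C A net)
    (hF : ∀ f ∈ F, Measurable f) (hC : 0 < C) (hN : 0 < N) (hε : 0 < ε) (hδ : 0 < δ) (hδ1 : δ ≤ 1)
    (hNle : 128 * C ^ 2 * (3 * A + Real.log (2 / δ)) / ε ^ 2 ≤ N) :
    ENNReal.ofReal (1 - δ) ≤ (Measure.pi fun _ : Fin N => μ)
      {S | ∀ f ∈ F, generalizationGap μ f S ≤ ε} := by
  refine ofReal_one_sub_le_measure hδ.le (measure_iUnion_le_of_le_half_pow hδ.le hδ1 fun k =>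
    h.measure_exists_chainLink_le hC hN hε hδ hδ1 hNle k) fun S hS f hf => ?_
  refine h.generalizationGap_le_of_forall_chainLinks hF hC hN hε (fun k g hg => ?_) hf
  by_contra! hlarge
  exact hS (Set.mem_iUnion.2 ⟨k, g, hg, hlarge⟩)

end IsDyadicNet

end Chaining

section CircuitLosses

open scoped Matrix.Norms.L2Operator NNReal

variable {m T : ℕ} {V : ℕ → Matrix (Fin 4 × Fin m) (Fin 4 × Fin m) ℂ} {Z : Type*}
  {O ρ : Z → Matrix (Fin 4 × Fin m) (Fin 4 × Fin m) ℂ} {C : ℝ}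

/-- The loss functions attained by the circuit, the gates ranging over all contractions: unlike
the unitary matrices these form the unit ball of a normed space, whose covering numbers are
volumetric. -/
def circuitLosses (V : ℕ → Matrix (Fin 4 × Fin m) (Fin 4 × Fin m) ℂ) (T : ℕ)
    (O ρ : Z → Matrix (Fin 4 × Fin m) (Fin 4 × Fin m) ℂ) : Set (Z → ℝ) :=
  qloss V T O ρ '' {U | ∀ t < T, ‖U t‖ ≤ 1}

lemma exists_finset_circuitLosses_net (hV : ∀ s ≤ T, ‖V s‖ ≤ 1) (hC : 0 ≤ C)
    (hρ : ∀ z, (ρ z).PosSemidef) (htr : ∀ z, (ρ z).trace.re ≤ 1) (hO : ∀ z, ‖O z‖ ≤ C)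
    {η : ℝ≥0} (hη : 0 < η) :
    ∃ net : Finset (Z → ℝ), (net : Set (Z → ℝ)) ⊆ circuitLosses V T O ρ ∧
      (net.card : ℝ) ≤ (1 + 2 / η) ^ (32 * T) ∧
      ∀ f ∈ circuitLosses V T O ρ, ∃ g ∈ net, ∀ z, |f z - g z| ≤ 2 * C * (T * η) := by
  classical
  obtain ⟨s, hcard, hs, hcover⟩ :=
    exists_finset_cover_of_norm_le_one (Matrix (Fin 4) (Fin 4) ℂ) T hη
  have hfinrank : Module.finrank ℝ (Matrix (Fin 4) (Fin 4) ℂ) = 32 := by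
    simp [Module.finrank_matrix, Complex.finrank_real_complex]
  rw [hfinrank, mul_comm] at hcard
  refine ⟨s.image (qloss V T O ρ), ?_, (Nat.cast_le.2 Finset.card_image_le).trans hcard, ?_⟩
  · exact Finset.coe_image (s := s) (f := qloss V T O ρ) ▸ Set.image_mono hs
  · rintro _ ⟨U, hU, rfl⟩
    obtain ⟨U', hU', hdist⟩ := hcover U hU
    refine ⟨_, Finset.mem_image_of_mem _ hU', fun z =>
      (abs_qloss_sub_qloss_le hV hU (hs U' hU') (hρ z) (htr z) (hO z)).trans ?_⟩
    gcongr
    calc ∑ t ∈ Finset.range T, ‖U t - U' t‖ ≤ ∑ _t ∈ Finset.range T, (η : ℝ) :=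
          Finset.sum_le_sum fun t ht => hdist t (Finset.mem_range.1 ht)
      _ = T * η := by simp

lemma one_add_mul_two_pow_le_exp {x : ℝ} (hx : 1 ≤ x) (k : ℕ) :
    1 + 4 * x * 2 ^ k ≤ Real.exp (2 * (1 + Real.log x) * (k + 1)) := by
  have hlog : 0 ≤ Real.log x := Real.log_nonneg hx
  have hpow : (1 : ℝ) ≤ 2 ^ k := one_le_pow₀ one_le_two
  have hfive : (5 : ℝ) ≤ Real.exp 2 := by
    linarith [Real.quadratic_le_exp_of_nonneg (zero_le_two (α := ℝ))]
  have htwo : (2 : ℝ) ≤ Real.exp 1 := by linarith [Real.add_one_le_exp (1 : ℝ)]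
  calc 1 + 4 * x * 2 ^ k ≤ 5 * x * 2 ^ k := by nlinarith
    _ ≤ Real.exp 2 * Real.exp (Real.log x) * Real.exp 1 ^ k := by
        rw [Real.exp_log (by positivity)]
        gcongr
    _ = Real.exp (2 + Real.log x + k) := by rw [Real.exp_one_pow, Real.exp_add, Real.exp_add]
    _ ≤ Real.exp (2 * (1 + Real.log x) * (k + 1)) := by
        gcongr
        nlinarith [mul_nonneg hlog (Nat.cast_nonneg (α := ℝ) k)]

lemma exists_finset_circuitLosses_net_two_pow (hT : 0 < T) (hV : ∀ s ≤ T, ‖V s‖ ≤ 1)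
    (hC : 0 ≤ C) (hρ : ∀ z, (ρ z).PosSemidef) (htr : ∀ z, (ρ z).trace.re ≤ 1)
    (hO : ∀ z, ‖O z‖ ≤ C) (k : ℕ) :
    ∃ net : Finset (Z → ℝ), (net : Set (Z → ℝ)) ⊆ circuitLosses V T O ρ ∧
      (net.card : ℝ) ≤ Real.exp (64 * (T * (1 + Real.log T)) * (k + 1)) ∧
      ∀ f ∈ circuitLosses V T O ρ, ∃ g ∈ net, ∀ z, |f z - g z| ≤ C / 2 ^ k := by
  have hη : (0 : ℝ≥0) < 1 / (2 * T * 2 ^ k) := by positivity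
  obtain ⟨net, hsub, hcard, happrox⟩ := exists_finset_circuitLosses_net hV hC hρ htr hO hη
  refine ⟨net, hsub, hcard.trans ?_, fun f hf => ?_⟩
  · have hT1 : (1 : ℝ) ≤ T := mod_cast hT
    calc (1 + 2 / ((1 / (2 * T * 2 ^ k) : ℝ≥0) : ℝ)) ^ (32 * T)
        = (1 + 4 * T * 2 ^ k) ^ (32 * T) := by
          push_cast
          field_simp
          ring
      _ ≤ Real.exp (2 * (1 + Real.log T) * (k + 1)) ^ (32 * T) := by
          gcongr
          exact one_add_mul_two_pow_le_exp hT1 k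
      _ = Real.exp (64 * (T * (1 + Real.log T)) * (k + 1)) := by
          rw [← Real.exp_nat_mul]
          push_cast
          ring_nf
  · obtain ⟨g, hg, hfg⟩ := happrox f hf
    refine ⟨g, hg, fun z => (hfg z).trans_eq ?_⟩
    push_cast
    field_simp

lemma measurable_of_mem_circuitLosses [MeasurableSpace Z]
    (hρ : ∀ p q, Measurable fun z => ρ z p q) (hO : ∀ p q, Measurable fun z => O z p q)
    {f : Z → ℝ} (hf : f ∈ circuitLosses V T O ρ) : Measurable f := by
  obtain ⟨U, -, rfl⟩ := hf
  exact measurable_qloss hρ hO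

lemma exists_isDyadicNet_circuitLosses [MeasurableSpace Z] (hT : 0 < T)
    (hV : ∀ s ≤ T, ‖V s‖ ≤ 1) (hC : 0 ≤ C) (hρm : ∀ p q, Measurable fun z => ρ z p q)
    (hρ : ∀ z, (ρ z).PosSemidef) (htr : ∀ z, (ρ z).trace.re ≤ 1)
    (hOm : ∀ p q, Measurable fun z => O z p q) (hO : ∀ z, ‖O z‖ ≤ C) :
    ∃ net, IsDyadicNet (circuitLosses V T O ρ) C (64 * (T * (1 + Real.log T))) net := by
  choose net hsub hcard happrox using
    exists_finset_circuitLosses_net_two_pow hT hV hC hρ htr hO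
  refine ⟨fun | 0 => {0} | k + 1 => net (k + 1), rfl, ?_, ?_, fun f hf => ?_⟩
  · rintro (_ | k) g hg
    · exact Finset.mem_singleton.1 hg ▸ measurable_const
    · exact measurable_of_mem_circuitLosses hρm hOm (hsub (k + 1) hg)
  · rintro (_ | k)
    · rw [Finset.card_singleton, Nat.cast_one]
      exact Real.one_le_exp (by positivity)
    · exact hcard (k + 1)
  · rintro (_ | k)
    · obtain ⟨U, hU, rfl⟩ := hf
      refine ⟨0, Finset.mem_singleton_self 0, fun z => ?_⟩
      simpa using abs_qloss_le hV hU (hρ z) (htr z) (hO z)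
    · exact happrox (k + 1) f hf

end CircuitLosses

open scoped Matrix.Norms.L2Operator in
theorem qmlm_sample_complexity_general {m T N : ℕ} (hT : 0 < T) (hN : 0 < N)
    {V : ℕ → Matrix (Fin 4 × Fin m) (Fin 4 × Fin m) ℂ} (hV : ∀ s ≤ T, ‖V s‖ ≤ 1)
    {Z : Type*} [MeasurableSpace Z] {μ : Measure Z} [IsProbabilityMeasure μ]
    {O ρ : Z → Matrix (Fin 4 × Fin m) (Fin 4 × Fin m) ℂ} {C : ℝ} (hC : 0 < C)
    (hρm : ∀ p q, Measurable fun z => ρ z p q) (hρ : ∀ z, (ρ z).PosSemidef)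
    (htr : ∀ z, (ρ z).trace.re ≤ 1) (hOm : ∀ p q, Measurable fun z => O z p q)
    (hO : ∀ z, ‖O z‖ ≤ C) {ε δ : ℝ} (hε : 0 < ε) (hδ : 0 < δ) (hδ1 : δ ≤ 1)
    (hNle : 24576 * C ^ 2 * (T * (1 + Real.log T) + Real.log (2 / δ)) / ε ^ 2 ≤ N) :
    ENNReal.ofReal (1 - δ) ≤ (Measure.pi fun _ : Fin N => μ)
      {S | ∀ U : ℕ → Matrix (Fin 4) (Fin 4) ℂ, (∀ t < T, ‖U t‖ ≤ 1) →
        generalizationGap μ (qloss V T O ρ U) S ≤ ε} := by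
  obtain ⟨net, hnet⟩ := exists_isDyadicNet_circuitLosses hT hV hC.le hρm hρ htr hOm hO
  have hlog : 0 ≤ Real.log (2 / δ) := Real.log_nonneg ((one_le_div hδ).2 (by linarith))
  have hNle' : 128 * C ^ 2 * (3 * (64 * (T * (1 + Real.log T))) + Real.log (2 / δ)) / ε ^ 2
      ≤ N := by
    refine le_trans ?_ hNle
    gcongr ?_ / _
    nlinarith [mul_nonneg (sq_nonneg C) hlog]
  refine (hnet.ofReal_one_sub_le_measure_forall_generalizationGap_le (μ := μ)
    (fun f hf => measurable_of_mem_circuitLosses hρm hOm hf) hC hN hε hδ hδ1 hNle').trans ?_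
  exact measure_mono fun S hS U hU => hS _ (Set.mem_image_of_mem _ hU)

/-- Sample complexity for generalization: if `N ≥ c·C²·(T(1+log T) + log(2/δ))/ε²`, then with
probability at least `1 − δ`, simultaneously for all parameter settings the generalization
error is at most `ε`. -/
theorem qmlm_sample_complexity :
    ∃ c : ℝ, 0 < c ∧
      ∀ (m T N : ℕ), 0 < m → 0 < T → 0 < N →
      ∀ V : ℕ → Matrix (Fin 4 × Fin m) (Fin 4 × Fin m) ℂ,
        (∀ s ≤ T, V s ∈ Matrix.unitaryGroup (Fin 4 × Fin m) ℂ) →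
      ∀ (Z : Type) (_ : MeasurableSpace Z) (μ : Measure Z), IsProbabilityMeasure μ →
      ∀ ρ : Z → Matrix (Fin 4 × Fin m) (Fin 4 × Fin m) ℂ,
        (∀ p q, Measurable fun z => ρ z p q) →
        (∀ z, (ρ z).PosSemidef ∧ (ρ z).trace = 1) →
      ∀ C : ℝ, 0 < C →
      ∀ O : Z → Matrix (Fin 4 × Fin m) (Fin 4 × Fin m) ℂ,
        (∀ p q, Measurable fun z => O z p q) →
        (∀ z, (O z).IsHermitian ∧ opNorm (O z) ≤ C) →
      ∀ ε : ℝ, 0 < ε → ∀ δ : ℝ, 0 < δ → δ < 1 →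
        c * C ^ 2 * (T * (1 + Real.log T) + Real.log (2 / δ)) / ε ^ 2 ≤ N →
        ENNReal.ofReal (1 - δ) ≤
          (Measure.pi fun _ : Fin N => μ) {S | ∀ U : ℕ → Matrix (Fin 4) (Fin 4) ℂ,
            (∀ t < T, U t ∈ Matrix.unitaryGroup (Fin 4) ℂ) →
            (∫ z, qloss V T O ρ U z ∂μ) - (1 / N) * ∑ i, qloss V T O ρ U (S i) ≤ ε} := by
  refine ⟨24576, by norm_num, fun m T N _ hT hN V hV Z _ μ _ ρ hρm hρ C hC O hOm hO ε hε δ hδ hδ1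
    hNle => ?_⟩
  have hV' (s) (hs : s ≤ T) := norm_le_one_of_mem_unitaryGroup (hV s hs)
  have htr (z) : (ρ z).trace.re ≤ 1 := by simp [(hρ z).2]
  have hO' (z) := opNorm_eq_norm (O z) ▸ (hO z).2
  refine (qmlm_sample_complexity_general (μ := μ) hT hN hV' hC hρm (fun z => (hρ z).1) htr hOm hO'
    hε hδ hδ1.le hNle).trans ?_
  exact measure_mono fun S hS U hU => hS U fun t ht => norm_le_one_of_mem_unitaryGroup (hU t ht)
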